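/- Let γ ∈ ℂ and k ≥ 0, and suppose γ ∉ {−1, −2, …, −k}. Then the left ideal A₁(Y∂ − γ) + A₁Y^k equals all of A₁, where Y∂ denotes the composite of multiplication by y with the derivative operator. -/

import Mathlib

set_option synthInstance.maxHeartbeats 1000000
set_option maxHeartbeats 1000000

/-- Multiplication by the variable `y`, as an endomorphism of `ℂ[y]`. -/
noncomputable def Yop : Module.End ℂ (Polynomial ℂ) := LinearMap.mulLeft ℂ Polynomial.X

/-- The formal derivative `∂`, as an endomorphism of `ℂ[y]`. -/
noncomputable def Dop : Module.End ℂ (Polynomial ℂ) :=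
  (Polynomial.derivative : Polynomial ℂ →ₗ[ℂ] Polynomial ℂ)

/-- The Weyl algebra `A₁`, realized as the ℂ-subalgebra of `End_ℂ(ℂ[y])` generated by
`Y` and `∂`. -/
noncomputable def A1 : Subalgebra ℂ (Module.End ℂ (Polynomial ℂ)) :=
  Algebra.adjoin ℂ {Yop, Dop}

/-- `Y` and `∂` as elements of `A₁`. -/
noncomputable def wY : A1 := ⟨Yop, Algebra.subset_adjoin (by simp)⟩
noncomputable def wD : A1 := ⟨Dop, Algebra.subset_adjoin (by simp)⟩

/-- The Weyl relation `∂ Y = Y ∂ + 1` in `End_ℂ(ℂ[y])`. -/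
theorem Dop_mul_Yop : Dop * Yop = Yop * Dop + 1 := by
  refine LinearMap.ext fun p => ?_
  simp only [Module.End.mul_apply, LinearMap.add_apply, Module.End.one_apply, Yop, Dop,
    LinearMap.mulLeft_apply]
  rw [Polynomial.derivative_mul, Polynomial.derivative_X, one_mul, add_comm]

theorem wD_mul_wY : wD * wY = wY * wD + 1 :=
  Subtype.ext Dop_mul_Yop

section WeylRelation

variable {K A : Type*} [Field K] [Ring A] [Algebra K A] {x d : A}

theorem mul_pow_succ_of_weyl_relation (h : d * x = x * d + 1) (n : ℕ) :
    d * x ^ (n + 1) = x ^ n * (x * d + ((n + 1 : ℕ) : A)) := by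
  induction n with
  | zero => simp [h]
  | succ n ih =>
    rw [pow_succ, ← mul_assoc, ih, mul_assoc, add_mul, mul_assoc x, h,
      (Nat.cast_commute (n + 1) x).eq, ← mul_add, pow_succ, mul_assoc]
    push_cast
    congr 2
    abel

/-- If a left ideal contains `x * d - γ` and `x ^ (n + 1)`, where `d * x = x * d + 1` and
`γ ≠ -(n + 1)`, then it contains `x ^ n`. -/
theorem pow_mem_of_pow_succ_mem_of_weyl_relation (h : d * x = x * d + 1) {I : Ideal A} {γ : K}
    {n : ℕ} (hγ : γ ≠ -((n + 1 : ℕ) : K)) (hI : x * d - algebraMap K A γ ∈ I)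
    (hn : x ^ (n + 1) ∈ I) : x ^ n ∈ I := by
  have hc : γ + ((n + 1 : ℕ) : K) ≠ 0 := fun h => hγ (eq_neg_of_add_eq_zero_left h)
  have key : algebraMap K A (γ + ((n + 1 : ℕ) : K)) * x ^ n ∈ I := by
    have hdiff := I.sub_mem (I.mul_mem_left d hn) (I.mul_mem_left (x ^ n) hI)
    rw [mul_pow_succ_of_weyl_relation h, ← mul_sub] at hdiff
    rw [Algebra.commutes, map_add, map_natCast]
    convert hdiff using 2
    abel
  have hinv := I.mul_mem_left (algebraMap K A (γ + ((n + 1 : ℕ) : K))⁻¹) key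
  rwa [← mul_assoc, ← map_mul, inv_mul_cancel₀ hc, map_one, one_mul] at hinv

theorem span_eq_top_of_weyl_relation (h : d * x = x * d + 1) (γ : K) (k : ℕ)
    (hγ : ∀ j : ℕ, 1 ≤ j → j ≤ k → γ ≠ -(j : K)) :
    Ideal.span {x * d - algebraMap K A γ, x ^ k} = ⊤ := by
  have hgen : x * d - algebraMap K A γ ∈ Ideal.span {x * d - algebraMap K A γ, x ^ k} :=
    Ideal.subset_span (by simp)
  have hpow : x ^ k ∈ Ideal.span {x * d - algebraMap K A γ, x ^ k} :=
    Ideal.subset_span (by simp)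
  generalize Ideal.span {x * d - algebraMap K A γ, x ^ k} = I at hgen hpow ⊢
  rw [Ideal.eq_top_iff_one]
  induction k with
  | zero => simpa using hpow
  | succ n ih =>
    exact ih (fun j h₁ h₂ => hγ j h₁ (h₂.trans n.le_succ))
      (pow_mem_of_pow_succ_mem_of_weyl_relation h (hγ (n + 1) (Nat.succ_pos n) le_rfl) hgen hpow)

end WeylRelation

/-- for `γ ∈ ℂ` with `γ ∉ {−1, …, −k}`, the left ideal
`A₁(Y∂ − γ) + A₁Y^k` is all of `A₁`. -/
theorem stmt14 (γ : ℂ) (k : ℕ) (hγ : ∀ j : ℕ, 1 ≤ j → j ≤ k → γ ≠ -(j : ℂ)) :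
    Ideal.span {wY * wD - algebraMap ℂ A1 γ, wY ^ k} = ⊤ := by
  exact span_eq_top_of_weyl_relation (A := A1) wD_mul_wY γ k hγ
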